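/- Injectivity of the virtual-configuration map ω (the paper's Observation, for positive scales): fix a tree shape T all of whose internal vertices have at least two children. If two decorations of T, each assigning to every internal vertex a normalized injective configuration and a strictly positive scale, satisfy ω(T, decoration₁) = ω(T, decoration₂), then the two decorations assign the same configuration to every internal vertex and the same scale to every non-root internal vertex. -/

import Mathlib

/-!
Place `ω(T)` in an arbitrary frame `x ↦ u + a • x`. At a vertex it splits into the blocks of the
children, placed at `u + a • z i` with scale `a * tᵢ`. Since configurations sum to zero, `u` is
determined by the placed tuple, as an iterated mean of its entries, whatever the scales are. In
particular each block determines the point `u + a • z i`. As `z` has mean zero and norm one, these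
points determine `a > 0` and `z`. Going down the tree recovers all scales and configurations.
-/

/-- Decorated planar rooted trees: a tree is either a leaf, or an internal
vertex decorated by a scale `t` and a configuration `z : Fin k → ℝ^m`, with a
family of `k` children. The scale at the root is never used. -/
inductive DTree (m : ℕ) : Type
  | leaf : DTree m
  | node (k : ℕ) (t : ℝ) (z : Fin k → EuclideanSpace ℝ (Fin m))
      (children : Fin k → DTree m) : DTree m

namespace DTree

/-- The effective scale of a subtree: the scale at its root vertex, with the
convention that the scale of a leaf is `1`. -/
def scaleOf {m : ℕ} : DTree m → ℝ
  | leaf => 1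
  | node _ t _ _ => t

/-- The output tuple `ω(T)` (as a list indexed by the leaves of `T`):
`ω(leaf)` is the single point `0`, and at an internal vertex with
configuration `z` and children `T₁, …, T_k`, `ω` is the concatenation over
`i` of the tuples with entries `z i + t_i • (entry of ω(T_i))`, where `t_i`
is the effective scale of `T_i`. -/
noncomputable def omega {m : ℕ} : DTree m → List (EuclideanSpace ℝ (Fin m))
  | leaf => [0]
  | node k _ z c =>
      (List.ofFn fun i : Fin k =>
        (omega (c i)).map fun x => z i + scaleOf (c i) • x).flatten

/-- A tree is reduced if every internal vertex has at least two children. -/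
def Reduced {m : ℕ} : DTree m → Prop
  | leaf => True
  | node k _ _ c => 2 ≤ k ∧ ∀ i, Reduced (c i)

/-- Every internal vertex carries an injective normalized configuration and a
strictly positive scale. -/
def ValidPos {m : ℕ} : DTree m → Prop
  | leaf => True
  | node _ t z c => Function.Injective z ∧ (∑ i, z i) = 0 ∧
      (∑ i, ‖z i‖ ^ 2) = 1 ∧ 0 < t ∧ ∀ i, ValidPos (c i)

/-- Two decorated trees are two decorations of the same tree shape. -/
inductive SameShape {m : ℕ} : DTree m → DTree m → Prop
  | leaf : SameShape leaf leaf
  | node {k : ℕ} {t₁ t₂ : ℝ} {z₁ z₂ : Fin k → EuclideanSpace ℝ (Fin m)}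
      {c₁ c₂ : Fin k → DTree m} (h : ∀ i, SameShape (c₁ i) (c₂ i)) :
      SameShape (node k t₁ z₁ c₁) (node k t₂ z₂ c₂)

/-- Two decorations of the same tree shape agree everywhere except possibly
in the scale at the root: the configurations at all internal vertices agree
and the scales at all non-root internal vertices agree. -/
inductive EqExceptRootScale {m : ℕ} : DTree m → DTree m → Prop
  | leaf : EqExceptRootScale leaf leaf
  | node {k : ℕ} {t₁ t₂ : ℝ} {z : Fin k → EuclideanSpace ℝ (Fin m)}
      {c₁ c₂ : Fin k → DTree m} (h : ∀ i, c₁ i = c₂ i) :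
      EqExceptRootScale (node k t₁ z c₁) (node k t₂ z c₂)

end DTree

theorem ofFn_eq_of_flatten_eq {α : Type*} {k : ℕ} {f g : Fin k → List α}
    (hlength : ∀ i, (f i).length = (g i).length)
    (hflatten : (List.ofFn f).flatten = (List.ofFn g).flatten) : f = g :=
  List.ofFn_injective <| List.eq_iff_flatten_eq.2
    ⟨hflatten, by simp only [List.map_ofFn, Function.comp_def, hlength]⟩

theorem eq_of_forall_add_eq_add_of_sum_eq {ι M : Type*} [Fintype ι] [Nonempty ι]
    [AddCancelCommMonoid M] [IsAddTorsionFree M] {x y : ι → M} {u v : M}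
    (hsum : ∑ i, x i = ∑ i, y i) (h : ∀ i, u + x i = v + y i) : u = v := by
  have htotal : ∑ i, (u + x i) = ∑ i, (v + y i) := Fintype.sum_congr _ _ h
  simp only [Finset.sum_add_distrib, hsum, add_left_inj, Finset.sum_const] at htotal
  exact nsmul_right_injective (Finset.card_ne_zero.2 Finset.univ_nonempty) htotal

/-- Normalized configurations of points, which represent configurations up to translation and
positive scaling. Distinct indices are allowed to carry the same point. -/
structure IsNormalizedConfig {ι E : Type*} [Fintype ι] [SeminormedAddCommGroup E]
    (z : ι → E) : Prop where
  sum_eq_zero : ∑ i, z i = 0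
  sum_norm_sq_eq_one : ∑ i, ‖z i‖ ^ 2 = 1

namespace IsNormalizedConfig

variable {ι E : Type*} [Fintype ι] [SeminormedAddCommGroup E] {z w : ι → E}

theorem nonempty (hz : IsNormalizedConfig z) : Nonempty ι := by
  by_contra hι
  rw [not_nonempty_iff] at hι
  simpa using hz.sum_norm_sq_eq_one

variable [NormedSpace ℝ E] {a b : ℝ}

theorem sum_smul_eq_zero (hz : IsNormalizedConfig z) (a : ℝ) : ∑ i, a • z i = 0 := by
  rw [← Finset.smul_sum, hz.sum_eq_zero, smul_zero]

theorem sum_norm_smul_sq (hz : IsNormalizedConfig z) (a : ℝ) : ∑ i, ‖a • z i‖ ^ 2 = a ^ 2 := by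
  simp only [norm_smul, mul_pow, ← Finset.mul_sum, hz.sum_norm_sq_eq_one, mul_one,
    Real.norm_eq_abs, sq_abs]

theorem origin_eq (hz : IsNormalizedConfig z) (hw : IsNormalizedConfig w)
    {u v : E} (h : ∀ i, u + a • z i = v + b • w i) : u = v :=
  have := hz.nonempty
  have : IsAddTorsionFree E := .of_isTorsionFree ℝ E
  eq_of_forall_add_eq_add_of_sum_eq
    ((hz.sum_smul_eq_zero a).trans (hw.sum_smul_eq_zero b).symm) h

theorem scale_eq (hz : IsNormalizedConfig z) (hw : IsNormalizedConfig w)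
    (ha : 0 ≤ a) (hb : 0 ≤ b) (h : ∀ i, a • z i = b • w i) : a = b := by
  rw [← sq_eq_sq₀ ha hb, ← hz.sum_norm_smul_sq, ← hw.sum_norm_smul_sq]
  simp only [h]

theorem scale_eq_and_config_eq (hz : IsNormalizedConfig z)
    (hw : IsNormalizedConfig w) (ha : 0 < a) (hb : 0 ≤ b) {u v : E}
    (h : ∀ i, u + a • z i = v + b • w i) : a = b ∧ z = w := by
  obtain rfl : u = v := hz.origin_eq hw h
  have hsmul : ∀ i, a • z i = b • w i := fun i => add_left_cancel (h i)
  obtain rfl : a = b := hz.scale_eq hw ha.le hb hsmul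
  exact ⟨rfl, funext fun i => smul_right_injective E ha.ne' (hsmul i)⟩

end IsNormalizedConfig

namespace DTree

variable {m : ℕ} {T T₁ T₂ : DTree m}

/-- Every internal vertex carries a normalized configuration. -/
def Normalized : DTree m → Prop
  | leaf => True
  | node _ _ z c => IsNormalizedConfig z ∧ ∀ i, Normalized (c i)

/-- Every internal vertex other than the root has a positive scale. The condition is imposed through
`scaleOf` on the children, where it holds automatically at leaves. -/
def PosNonrootScales : DTree m → Prop
  | leaf => True
  | node _ _ _ c => ∀ i, 0 < scaleOf (c i) ∧ PosNonrootScales (c i)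

theorem ValidPos.scaleOf_pos (h : ValidPos T) : 0 < scaleOf T := by
  cases T with
  | leaf => exact one_pos
  | node => exact h.2.2.2.1

theorem ValidPos.normalized (h : ValidPos T) : Normalized T := by
  induction T with
  | leaf => trivial
  | node k t z c ih =>
    obtain ⟨-, hsum, hnorm, -, hc⟩ := h
    exact ⟨⟨hsum, hnorm⟩, fun i => ih i (hc i)⟩

theorem ValidPos.posNonrootScales (h : ValidPos T) : PosNonrootScales T := by
  induction T with
  | leaf => trivial
  | node k t z c ih =>
    obtain ⟨-, -, -, -, hc⟩ := h
    exact fun i => ⟨(hc i).scaleOf_pos, ih i (hc i)⟩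

theorem SameShape.length_omega_eq (h : SameShape T₁ T₂) :
    (omega T₁).length = (omega T₂).length := by
  induction h with
  | leaf => rfl
  | node _ ih => simp only [omega, List.length_flatten, List.map_ofFn, Function.comp_def,
      List.length_map, ih]

/-- The output tuple `ω(T)` placed in the frame with origin `u` and scale `a`. -/
noncomputable def omegaAt (u : EuclideanSpace ℝ (Fin m)) (a : ℝ) (T : DTree m) :
    List (EuclideanSpace ℝ (Fin m)) :=
  (omega T).map fun x => u + a • x

theorem omegaAt_zero_one (T : DTree m) : omegaAt 0 1 T = omega T := by
  simp only [omegaAt, zero_add, one_smul, List.map_id']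

variable {u v : EuclideanSpace ℝ (Fin m)} {a b : ℝ}

theorem omegaAt_node (u : EuclideanSpace ℝ (Fin m)) (a : ℝ) {k : ℕ} (t : ℝ)
    (z : Fin k → EuclideanSpace ℝ (Fin m)) (c : Fin k → DTree m) :
    omegaAt u a (node k t z c) =
      (List.ofFn fun i => omegaAt (u + a • z i) (a * scaleOf (c i)) (c i)).flatten := by
  simp only [omegaAt, omega, List.map_flatten, List.map_ofFn, Function.comp_def, List.map_map,
    smul_add, mul_smul, add_assoc]

theorem omegaAt_child_eq {k : ℕ} {t₁ t₂ : ℝ} {z₁ z₂ : Fin k → EuclideanSpace ℝ (Fin m)}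
    {c₁ c₂ : Fin k → DTree m} (hshape : ∀ i, SameShape (c₁ i) (c₂ i))
    (hω : omegaAt u a (node k t₁ z₁ c₁) = omegaAt v b (node k t₂ z₂ c₂)) (i : Fin k) :
    omegaAt (u + a • z₁ i) (a * scaleOf (c₁ i)) (c₁ i) =
      omegaAt (v + b • z₂ i) (b * scaleOf (c₂ i)) (c₂ i) := by
  rw [omegaAt_node, omegaAt_node] at hω
  refine congrFun (ofFn_eq_of_flatten_eq (fun j => ?_) hω) i
  simp only [omegaAt, List.length_map, (hshape j).length_omega_eq]

theorem origin_eq_of_omegaAt_eq (hshape : SameShape T₁ T₂) (h₁ : Normalized T₁)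
    (h₂ : Normalized T₂) (hω : omegaAt u a T₁ = omegaAt v b T₂) : u = v := by
  induction hshape generalizing u v a b with
  | leaf => simpa [omegaAt, omega] using hω
  | node hc ih =>
    exact h₁.1.origin_eq h₂.1 fun i => ih i (h₁.2 i) (h₂.2 i) (omegaAt_child_eq hc hω i)

theorem eq_of_omegaAt_mul_scaleOf_eq (hshape : SameShape T₁ T₂)
    (h₁ : Normalized T₁) (h₂ : Normalized T₂)
    (hpos₁ : PosNonrootScales T₁) (hpos₂ : PosNonrootScales T₂)
    (ht₁ : 0 < scaleOf T₁) (ht₂ : 0 < scaleOf T₂) (ha : 0 < a)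
    (hω : omegaAt u (a * scaleOf T₁) T₁ = omegaAt v (a * scaleOf T₂) T₂) : T₁ = T₂ := by
  induction hshape generalizing u v a with
  | leaf => rfl
  | @node k t₁ t₂ z₁ z₂ c₁ c₂ hc ih =>
    simp only [scaleOf] at ht₁ ht₂ hω
    have hblock := omegaAt_child_eq hc hω
    have horigin : ∀ i, u + (a * t₁) • z₁ i = v + (a * t₂) • z₂ i := fun i =>
      origin_eq_of_omegaAt_eq (hc i) (h₁.2 i) (h₂.2 i) (hblock i)
    obtain ⟨hscale, rfl⟩ :=
      h₁.1.scale_eq_and_config_eq h₂.1 (mul_pos ha ht₁) (mul_pos ha ht₂).le horigin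
    obtain rfl : t₁ = t₂ := mul_left_cancel₀ ha.ne' hscale
    have hchildren : c₁ = c₂ := funext fun i =>
      ih i (h₁.2 i) (h₂.2 i) (hpos₁ i).2 (hpos₂ i).2 (hpos₁ i).1 (hpos₂ i).1
        (mul_pos ha ht₁) (hblock i)
    rw [hchildren]

theorem omega_injective_general (hshape : SameShape T₁ T₂)
    (h₁ : Normalized T₁) (h₂ : Normalized T₂)
    (hpos₁ : PosNonrootScales T₁) (hpos₂ : PosNonrootScales T₂)
    (hω : omega T₁ = omega T₂) : EqExceptRootScale T₁ T₂ := by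
  rw [← omegaAt_zero_one T₁, ← omegaAt_zero_one T₂] at hω
  cases hshape with
  | leaf => exact .leaf
  | @node k t₁ t₂ z₁ z₂ c₁ c₂ hc =>
    have hblock := omegaAt_child_eq hc hω
    obtain rfl : z₁ = z₂ := funext fun i => by
      simpa only [zero_add, one_smul] using
        origin_eq_of_omegaAt_eq (hc i) (h₁.2 i) (h₂.2 i) (hblock i)
    exact .node fun i => eq_of_omegaAt_mul_scaleOf_eq (hc i) (h₁.2 i) (h₂.2 i)
      (hpos₁ i).2 (hpos₂ i).2 (hpos₁ i).1 (hpos₂ i).1 one_pos (hblock i)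

/-- Injectivity of the virtual-configuration map `ω` (the paper's
Observation, for positive scales): two decorations of a reduced tree shape by
normalized injective configurations and strictly positive scales with the
same output tuple assign the same configuration to every internal vertex and
the same scale to every non-root internal vertex. -/
theorem omega_injective {m : ℕ} (T₁ T₂ : DTree m)
    (hshape : SameShape T₁ T₂)
    (hred : Reduced T₁) (hval₁ : ValidPos T₁) (hval₂ : ValidPos T₂)
    (hω : omega T₁ = omega T₂) :
    EqExceptRootScale T₁ T₂ :=
  omega_injective_general hshape hval₁.normalized hval₂.normalized
    hval₁.posNonrootScales hval₂.posNonrootScales hω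

end DTree
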